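/- Let S be a point set of size q + k in PG(2,q) for some k ≥ 3. Suppose that ℓ₁ is a k-secant of S all of whose points of S ∩ ℓ₁ have type (2_q, k_1). Then all the k-secants of S that contain at least one point of type (2_q, k_1) are concurrent. -/

import Mathlib

/-! Common setup: the Desarguesian projective plane `PG(2,q)` over a finite field `F = GF(q)`.
Points are the projective points of `F³`; lines are the 2-dimensional linear subspaces of `F³`,
with incidence given by containment. -/

/-- Points of `PG(2,F)`. -/
abbrev PGPoint (F : Type*) [Field F] := Projectivization F (Fin 3 → F)

/-- Lines of `PG(2,F)`: the 2-dimensional linear subspaces of `F³`. -/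
abbrev PGLine (F : Type*) [Field F] := {W : Submodule F (Fin 3 → F) // Module.finrank F W = 2}

/-- Incidence between a point and a line of `PG(2,F)`. -/
def pgMem {F : Type*} [Field F] (P : PGPoint F) (L : PGLine F) : Prop :=
  P.submodule ≤ L.val

/-- The number of points of the point set `B` lying on the line `L`;
`L` is a *`k`-secant* of `B` if `nsec B L = k`, a *tangent* if `k = 1`,
a *bisecant* if `k = 2` and a *trisecant* if `k = 3`. -/
noncomputable def nsec {F : Type*} [Field F] (B : Set (PGPoint F)) (L : PGLine F) : ℕ :=
  {P ∈ B | pgMem P L}.ncard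

/-- A blocking set: a point set meeting every line. -/
def isBlocking {F : Type*} [Field F] (B : Set (PGPoint F)) : Prop :=
  ∀ L : PGLine F, ∃ P ∈ B, pgMem P L

/-- A minimal blocking set: every point is essential. -/
def isMinimalBlocking {F : Type*} [Field F] (B : Set (PGPoint F)) : Prop :=
  isBlocking B ∧ ∀ P ∈ B, ¬ isBlocking (B \ {P})

/-- `B` is a blocking set of Rédei type with Rédei line `ℓ`: a blocking set of size
`q + N ≤ 2q` such that `ℓ` meets `B` in exactly `N = |B| − q` points. -/
def isRedeiWithLine {F : Type*} [Field F] (q : ℕ) (B : Set (PGPoint F)) (ℓ : PGLine F) : Prop :=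
  isBlocking B ∧ B.ncard ≤ 2 * q ∧ nsec B ℓ + q = B.ncard

/-- A semioval: through each of its points there passes exactly one tangent. -/
def isSemioval {F : Type*} [Field F] (S : Set (PGPoint F)) : Prop :=
  ∀ P ∈ S, ∃! t : PGLine F, pgMem P t ∧ nsec S t = 1

/-- The point `P ∈ S` has type `(2_q, k_1)`: among the `q + 1` lines through `P`, exactly `q`
are bisecants of `S` and exactly one is a `k`-secant of `S`. -/
def hasType2qk1 {F : Type*} [Field F] (q k : ℕ) (S : Set (PGPoint F)) (P : PGPoint F) : Prop :=
  {L : PGLine F | pgMem P L ∧ nsec S L = 2}.ncard = q ∧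
  {L : PGLine F | pgMem P L ∧ nsec S L = k}.ncard = 1

theorem not_forall_sub_pow_eq {F : Type*} [Field F] {T : Finset F} {n : ℕ} (hn : n ≠ 0) (hT : n < T.card)
    (m r : F) : ¬ ∀ t ∈ T, (m - t) ^ n = r := by
  intro h
  have hzero : (Polynomial.X - Polynomial.C m) ^ n - Polynomial.C ((-1) ^ n * r) = 0 := by
    refine Polynomial.eq_zero_of_natDegree_lt_card_of_eval_eq_zero' _ T (fun t ht => ?_) ?_
    · have : t - m = -1 * (m - t) := by ring
      rw [Polynomial.eval_sub, Polynomial.eval_pow, Polynomial.eval_sub, Polynomial.eval_X,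
        Polynomial.eval_C, Polynomial.eval_C, this, mul_pow, h t ht, sub_self]
    · rwa [Polynomial.natDegree_sub_C, Polynomial.natDegree_pow, Polynomial.natDegree_X_sub_C,
        mul_one]
  have hdeg := congrArg Polynomial.natDegree hzero
  rw [Polynomial.natDegree_sub_C, Polynomial.natDegree_pow, Polynomial.natDegree_X_sub_C,
    mul_one, Polynomial.natDegree_zero] at hdeg
  exact hn hdeg

section AffinePart

variable {F ι : Type*} [Field F] [DecidableEq F]

/-- The number of points of `U` on the line of slope `s` through `P` that differ from `P`,
where a point `Q` has affine coordinates `(a Q, b Q)` and the lines of slope `s` are the level sets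
of `a - s * b`. -/
def slopeCount (U : Finset ι) (a b : ι → F) (P : ι) (s : F) : ℕ :=
  (U.filter fun Q => b Q ≠ b P ∧ a Q - a P = s * (b Q - b P)).card

theorem slopeCount_eq_zero {U : Finset ι} {a b : ι → F} {P : ι} (hP : P ∈ U) {s : F}
    (hs : Set.InjOn (fun Q => a Q - s * b Q) U) : slopeCount U a b P s = 0 := by
  rw [slopeCount, Finset.card_eq_zero, Finset.filter_eq_empty_iff]
  rintro Q hQ ⟨hne, heq⟩
  have : Q = P := hs hQ hP (by linear_combination heq)
  exact hne (this ▸ rfl)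

theorem exists_prod_displacement_eq [Fintype F] [DecidableEq ι] (U : Finset ι) (a b : ι → F)
    (P : ι) :
    ∃ c : F, ∀ t : F, ∏ Q ∈ U.erase P, ((a Q - a P) - t * (b Q - b P)) =
      c * ∏ s : F, (s - t) ^ slopeCount U a b P s := by
  refine ⟨∏ Q ∈ U.erase P, if b Q = b P then a Q - a P else b Q - b P, fun t => ?_⟩
  have hfactor : ∀ Q ∈ U.erase P, (a Q - a P) - t * (b Q - b P) =
      (if b Q = b P then a Q - a P else b Q - b P) *
        (if b Q ≠ b P then (a Q - a P) / (b Q - b P) - t else 1) := by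
    intro Q _
    by_cases h : b Q = b P
    · simp [h]
    · have : b Q - b P ≠ 0 := sub_ne_zero.2 h
      simp only [h, ne_eq, not_false_eq_true, if_true, if_false]
      field_simp
  rw [Finset.prod_congr rfl hfactor, Finset.prod_mul_distrib, ← Finset.prod_filter,
    ← Finset.prod_fiberwise' _ (fun Q => (a Q - a P) / (b Q - b P)) (fun s => s - t)]
  congr 1
  refine Finset.prod_congr rfl fun s _ => ?_
  rw [Finset.prod_const, slopeCount]
  congr 2
  ext Q
  simp only [Finset.mem_filter, Finset.mem_erase]
  constructor
  · rintro ⟨⟨⟨_, hU⟩, hb⟩, h⟩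
    exact ⟨hU, hb, (div_eq_iff (sub_ne_zero.2 hb)).1 h⟩
  · rintro ⟨hU, hb, h⟩
    exact ⟨⟨⟨fun h => hb (h ▸ rfl), hU⟩, hb⟩, (div_eq_iff (sub_ne_zero.2 hb)).2 h⟩

theorem prod_displacement_eq_neg_one [Fintype F] [DecidableEq ι] {U : Finset ι} {a b : ι → F}
    (hU : U.card = Fintype.card F) {P : ι} (hP : P ∈ U) {t : F}
    (ht : Set.InjOn (fun Q => a Q - t * b Q) U) :
    ∏ Q ∈ U.erase P, ((a Q - a P) - t * (b Q - b P)) = -1 := by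
  have hinj : Set.InjOn (fun Q => (a Q - a P) - t * (b Q - b P)) U := by
    intro Q hQ R hR h
    exact ht hQ hR (by simp only at h ⊢; linear_combination h)
  have himage : U.image (fun Q => (a Q - a P) - t * (b Q - b P)) = Finset.univ :=
    Finset.eq_univ_of_card _ ((Finset.card_image_of_injOn hinj).trans hU)
  have hunits : ∏ x ∈ (Finset.univ : Finset F).erase 0, x = -1 := by
    have h := congrArg (Units.coeHom F) (FiniteField.prod_univ_units_id_eq_neg_one (K := F))
    rw [map_prod] at h
    simp only [Units.coeHom_apply, Units.val_neg, Units.val_one] at h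
    rw [← h]
    refine (Finset.prod_bij (fun (x : Fˣ) _ => (x : F)) ?_ ?_ ?_ ?_).symm
    · simp
    · intro x _ y _ h
      exact Units.ext h
    · intro x hx
      exact ⟨Units.mk0 x (Finset.ne_of_mem_erase hx), Finset.mem_univ _, rfl⟩
    · simp
  rw [← hunits]
  refine Finset.prod_bij (fun Q _ => (a Q - a P) - t * (b Q - b P)) ?_ ?_ ?_ ?_
  · intro Q hQ
    refine Finset.mem_erase.2 ⟨fun h => Finset.ne_of_mem_erase hQ ?_, Finset.mem_univ _⟩
    exact hinj (Finset.mem_of_mem_erase hQ) hP (by simp [h])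
  · intro Q hQ R hR h
    exact hinj (Finset.mem_of_mem_erase hQ) (Finset.mem_of_mem_erase hR) h
  · intro x hx
    obtain ⟨Q, hQ, rfl⟩ := Finset.mem_image.1 (himage ▸ Finset.mem_univ x)
    refine ⟨Q, Finset.mem_erase.2 ⟨?_, hQ⟩, rfl⟩
    rintro rfl
    simp at hx
  · intros
    rfl

/-- Let `U` consist of `q` affine points, none of whose secants has a slope in `T`. If exactly one
point of `U` is seen from `P₁` along each finite slope outside `T`, then no point `P₂` of `U` sees
exactly one point along each finite slope outside `T` except for one such slope `m` along which it
sees `k - 1 ≥ 2` points, where `k ≤ |T|`. -/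
theorem slopeCount_ne [Fintype F] {U : Finset ι} {a b : ι → F}
    (hU : U.card = Fintype.card F) {T : Finset F}
    (hinj : ∀ t ∈ T, Set.InjOn (fun Q => a Q - t * b Q) U) {k : ℕ} (hk : 3 ≤ k) (hT : k ≤ T.card)
    {P₁ P₂ : ι} (hP₁ : P₁ ∈ U) (hP₂ : P₂ ∈ U) {m : F} (hm : m ∉ T)
    (h₁ : ∀ s ∉ T, slopeCount U a b P₁ s = 1)
    (h₂ : ∀ s ∉ T, s ≠ m → slopeCount U a b P₂ s = 1) :
    slopeCount U a b P₂ m ≠ k - 1 := by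
  classical
  intro h₂m
  have hcount : ∀ s, slopeCount U a b P₂ s =
      slopeCount U a b P₁ s + if s = m then k - 2 else 0 := by
    intro s
    by_cases hs : s ∈ T
    · have hne : s ≠ m := fun h => hm (h ▸ hs)
      simp [slopeCount_eq_zero hP₁ (hinj s hs), slopeCount_eq_zero hP₂ (hinj s hs), hne]
    · by_cases hsm : s = m
      · subst hsm
        rw [h₁ s hs, h₂m, if_pos rfl]
        omega
      · rw [h₁ s hs, h₂ s hs hsm, if_neg hsm]
  obtain ⟨c₁, hc₁⟩ := exists_prod_displacement_eq U a b P₁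
  obtain ⟨c₂, hc₂⟩ := exists_prod_displacement_eq U a b P₂
  refine not_forall_sub_pow_eq (T := T) (n := k - 2) (by omega) (by omega) m (c₁ / c₂)
    fun t ht => ?_
  have e₁ := (hc₁ t).symm.trans (prod_displacement_eq_neg_one hU hP₁ (hinj t ht))
  have e₂ := (hc₂ t).symm.trans (prod_displacement_eq_neg_one hU hP₂ (hinj t ht))
  have hsplit : ∏ s : F, (s - t) ^ slopeCount U a b P₂ s =
      (∏ s : F, (s - t) ^ slopeCount U a b P₁ s) * (m - t) ^ (k - 2) := by
    simp only [hcount, pow_add, Finset.prod_mul_distrib, pow_ite, pow_zero]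
    rw [Finset.prod_ite_eq' Finset.univ m (fun s => (s - t) ^ (k - 2)), if_pos (Finset.mem_univ m)]
  rw [hsplit] at e₂
  set A := ∏ s : F, (s - t) ^ slopeCount U a b P₁ s
  have hA : A ≠ 0 := by
    intro h
    simp [h] at e₁
  have hc₂ne : c₂ ≠ 0 := by
    rintro rfl
    simp at e₂
  rw [eq_div_iff hc₂ne]
  apply mul_left_cancel₀ hA
  linear_combination e₂ - e₁

end AffinePart

section ProjectivePart

variable {F : Type*} [Field F]

theorem pgMem_mk {v : Fin 3 → F} (hv : v ≠ 0) (L : PGLine F) :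
    pgMem (Projectivization.mk F v hv) L ↔ v ∈ L.val := by
  rw [pgMem, Projectivization.submodule_mk, Submodule.span_singleton_le_iff_mem]

theorem pgMem_iff_rep_mem (P : PGPoint F) (L : PGLine F) : pgMem P L ↔ P.rep ∈ L.val := by
  rw [← pgMem_mk P.rep_nonzero, Projectivization.mk_rep]

theorem pgLine_eq_of_mem {L L' : PGLine F} {P Q : PGPoint F} (hPQ : P ≠ Q) (hP : pgMem P L)
    (hQ : pgMem Q L) (hP' : pgMem P L') (hQ' : pgMem Q L') : L = L' := by
  have hind : LinearIndependent F ![P.rep, Q.rep] := by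
    rwa [Projectivization.linearIndependent_pair_iff_ne]
  have hspan : Module.finrank F (Submodule.span F (Set.range ![P.rep, Q.rep])) = 2 := by
    rw [finrank_span_eq_card hind, Fintype.card_fin]
  have hle : ∀ M : PGLine F, pgMem P M → pgMem Q M →
      Submodule.span F (Set.range ![P.rep, Q.rep]) = M.val := by
    intro M hPM hQM
    refine Submodule.eq_of_le_of_finrank_eq (Submodule.span_le.2 ?_) (hspan.trans M.2.symm)
    rintro _ ⟨i, rfl⟩
    fin_cases i
    · exact (pgMem_iff_rep_mem P M).1 hPM
    · exact (pgMem_iff_rep_mem Q M).1 hQM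
  exact Subtype.ext ((hle L hP hQ).symm.trans (hle L' hP' hQ'))

/-- The line of `PG(2,F)` with equation `φ = 0`. -/
def kerLine (φ : Module.Dual F (Fin 3 → F)) (hφ : φ ≠ 0) : PGLine F :=
  ⟨LinearMap.ker φ, by
    have h := Module.Dual.finrank_ker_add_one_of_ne_zero hφ
    rw [Module.finrank_fin_fun] at h
    omega⟩

theorem pgMem_kerLine {φ : Module.Dual F (Fin 3 → F)} (hφ : φ ≠ 0) (P : PGPoint F) :
    pgMem P (kerLine φ hφ) ↔ φ P.rep = 0 := by
  rw [pgMem_iff_rep_mem]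
  rfl

theorem mk_pgMem_kerLine {φ : Module.Dual F (Fin 3 → F)} (hφ : φ ≠ 0) {v : Fin 3 → F}
    (hv : v ≠ 0) : pgMem (Projectivization.mk F v hv) (kerLine φ hφ) ↔ φ v = 0 := by
  rw [pgMem_mk]
  rfl

theorem exists_pgMem_pgMem (L L' : PGLine F) : ∃ P : PGPoint F, pgMem P L ∧ pgMem P L' := by
  have hsum := Submodule.finrank_sup_add_finrank_inf_eq L.val L'.val
  have hle := Submodule.finrank_le (L.val ⊔ L'.val)
  rw [Module.finrank_fin_fun] at hle
  rw [L.2, L'.2] at hsum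
  have hne : L.val ⊓ L'.val ≠ ⊥ := by
    intro h
    rw [h, finrank_bot] at hsum
    omega
  obtain ⟨v, hv, hv0⟩ := Submodule.exists_mem_ne_zero_of_ne_bot hne
  exact ⟨Projectivization.mk F v hv0, (pgMem_mk hv0 L).2 hv.1, (pgMem_mk hv0 L').2 hv.2⟩

theorem exists_ne_pgMem (P : PGPoint F) (L : PGLine F) : ∃ Q, Q ≠ P ∧ pgMem Q L := by
  have hnot : ¬ L.val ≤ P.submodule := by
    intro h
    have := Submodule.finrank_mono h
    rw [L.2, P.finrank_submodule] at this
    omega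
  obtain ⟨v, hvL, hvP⟩ := Set.not_subset.1 hnot
  have hv0 : v ≠ 0 := fun h => hvP (h ▸ P.submodule.zero_mem)
  refine ⟨Projectivization.mk F v hv0, ?_, (pgMem_mk hv0 L).2 hvL⟩
  rintro rfl
  exact hvP (by simp [Projectivization.submodule_mk])

theorem exists_pgLine_pgMem (P : PGPoint F) : ∃ L : PGLine F, pgMem P L := by
  have hne : ∃ v, v ∉ P.submodule := by
    by_contra! h
    have h1 := P.finrank_submodule
    rw [Submodule.eq_top_iff'.2 h, finrank_top, Module.finrank_fin_fun] at h1
    omega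
  obtain ⟨v, hv⟩ := hne
  have hv0 : v ≠ 0 := fun h => hv (h ▸ P.submodule.zero_mem)
  have hPQ : P ≠ Projectivization.mk F v hv0 := by
    rintro rfl
    exact hv (by simp [Projectivization.submodule_mk])
  have hind : LinearIndependent F ![P.rep, (Projectivization.mk F v hv0).rep] := by
    rwa [Projectivization.linearIndependent_pair_iff_ne]
  refine ⟨⟨Submodule.span F (Set.range ![P.rep, (Projectivization.mk F v hv0).rep]), ?_⟩, ?_⟩
  · rw [finrank_span_eq_card hind, Fintype.card_fin]
  · exact (pgMem_iff_rep_mem _ _).2 (Submodule.subset_span ⟨0, rfl⟩)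

/-- A basis adapted to a flag: its first vector spans `P`, its first two vectors span `L`. -/
theorem exists_basis_adapted {P : PGPoint F} {L : PGLine F} (hPL : pgMem P L) :
    ∃ B : Module.Basis (Fin 3) F (Fin 3 → F), B 0 = P.rep ∧ ∀ v, v ∈ L.val ↔ B.coord 2 v = 0 := by
  obtain ⟨Q, hQP, hQL⟩ := exists_ne_pgMem P L
  have hPr := (pgMem_iff_rep_mem P L).1 hPL
  have hQr := (pgMem_iff_rep_mem Q L).1 hQL
  have hpair : LinearIndependent F ![P.rep, Q.rep] :=
    (Projectivization.linearIndependent_pair_iff_ne).2 hQP.symm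
  obtain ⟨g, hg⟩ : ∃ g, g ∉ L.val := by
    by_contra! h
    have h1 := L.2
    rw [Submodule.eq_top_iff'.2 h, finrank_top, Module.finrank_fin_fun] at h1
    omega
  have hind : LinearIndependent F ![P.rep, Q.rep, g] := by
    rw [Fintype.linearIndependent_iff]
    intro c hc
    simp only [Fin.sum_univ_three, Matrix.cons_val_zero, Matrix.cons_val_one,
      Matrix.cons_val] at hc
    have h2 : c 2 = 0 := by
      by_contra h
      apply hg
      rw [← L.val.smul_mem_iff h]
      have : c 2 • g = -(c 0 • P.rep + c 1 • Q.rep) := (neg_eq_of_add_eq_zero_right hc).symm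
      rw [this]
      exact L.val.neg_mem (L.val.add_mem (L.val.smul_mem _ hPr) (L.val.smul_mem _ hQr))
    rw [h2, zero_smul, add_zero] at hc
    obtain ⟨h0, h1⟩ := LinearIndependent.pair_iff.1 hpair _ _ hc
    intro i
    fin_cases i <;> assumption
  refine ⟨basisOfLinearIndependentOfCardEqFinrank hind (by simp), by simp, fun v => ?_⟩
  set B := basisOfLinearIndependentOfCardEqFinrank hind (by simp) with hB
  have hv : B.coord 0 v • P.rep + B.coord 1 v • Q.rep + B.coord 2 v • g = v := by
    have h := B.sum_repr v
    rw [Fin.sum_univ_three] at h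
    simpa [hB] using h
  have hmem : B.coord 0 v • P.rep + B.coord 1 v • Q.rep ∈ L.val :=
    L.val.add_mem (L.val.smul_mem _ hPr) (L.val.smul_mem _ hQr)
  constructor
  · intro h
    by_contra hne
    rw [← hv, L.val.add_mem_iff_right hmem, L.val.smul_mem_iff hne] at h
    exact hg h
  · intro h
    rw [h, zero_smul, add_zero] at hv
    rwa [hv] at hmem

theorem coord_rep_ne_zero_of_ne {P Q : PGPoint F} (hQP : Q ≠ P)
    {B : Module.Basis (Fin 3) F (Fin 3 → F)} (hB : B 0 = P.rep) (h2 : B.coord 2 Q.rep = 0) :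
    B.coord 1 Q.rep ≠ 0 := by
  intro h1
  have hv := B.sum_repr Q.rep
  rw [Fin.sum_univ_three] at hv
  simp only [Module.Basis.coord_apply] at h1 h2
  rw [h1, h2, zero_smul, zero_smul, add_zero, add_zero, hB] at hv
  apply hQP
  rw [← Q.mk_rep, ← P.mk_rep, Projectivization.mk_eq_mk_iff']
  exact ⟨_, hv⟩

theorem ncard_pencil_le [Fintype F] (P : PGPoint F) :
    {L : PGLine F | pgMem P L}.ncard ≤ Fintype.card F + 1 := by
  obtain ⟨L₀, hL₀⟩ := exists_pgLine_pgMem P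
  obtain ⟨B, hB, -⟩ := exists_basis_adapted hL₀
  have hz : B.coord 2 ≠ 0 := fun h => by
    simpa using LinearMap.congr_fun h (B 2)
  have hy : ∀ t : F, B.coord 1 - t • B.coord 2 ≠ 0 := fun t h => by
    simpa using LinearMap.congr_fun h (B 1)
  let pencil : Option F → PGLine F := fun o =>
    o.elim (kerLine _ hz) fun t => kerLine _ (hy t)
  have hsub : {L : PGLine F | pgMem P L} ⊆ Set.range pencil := by
    intro L hL
    obtain ⟨Q, hQP, hQL⟩ := exists_ne_pgMem P L
    by_cases h2 : B.coord 2 Q.rep = 0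
    · refine ⟨none, pgLine_eq_of_mem hQP ?_ ?_ hQL hL⟩
      · exact (pgMem_kerLine hz Q).2 h2
      · exact (pgMem_kerLine hz P).2 (by simp [← hB])
    · refine ⟨some (B.coord 1 Q.rep / B.coord 2 Q.rep), pgLine_eq_of_mem hQP ?_ ?_ hQL hL⟩
      · refine (pgMem_kerLine (hy _) Q).2 ?_
        rw [LinearMap.sub_apply, LinearMap.smul_apply, smul_eq_mul, div_mul_cancel₀ _ h2, sub_self]
      · exact (pgMem_kerLine (hy _) P).2 (by simp [← hB])
  calc {L : PGLine F | pgMem P L}.ncard ≤ (Set.range pencil).ncard :=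
        Set.ncard_le_ncard hsub (Set.toFinite _)
    _ ≤ Nat.card (Option F) := by
        rw [← Set.image_univ, ← Set.ncard_univ]
        exact Set.ncard_image_le (Set.toFinite _)
    _ = Fintype.card F + 1 := by rw [Nat.card_eq_fintype_card, Fintype.card_option]

namespace hasType2qk1

variable {k : ℕ} {S : Set (PGPoint F)} {P : PGPoint F} {L m : PGLine F}

theorem eq_of_nsec_eq {q : ℕ} (hP : hasType2qk1 q k S P) (hL : pgMem P L) (hm : pgMem P m)
    (hLk : nsec S L = k) (hmk : nsec S m = k) : L = m := by
  obtain ⟨A, hA⟩ := Set.ncard_eq_one.1 hP.2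
  have h1 : L ∈ ({A} : Set (PGLine F)) := hA ▸ ⟨hL, hLk⟩
  have h2 : m ∈ ({A} : Set (PGLine F)) := hA ▸ ⟨hm, hmk⟩
  exact h1.trans h2.symm

theorem nsec_eq_two [Fintype F] (hP : hasType2qk1 (Fintype.card F) k S P) (hk : 3 ≤ k)
    (hL : pgMem P L) (hLk : nsec S L ≠ k) : nsec S L = 2 := by
  have hdisj : Disjoint {L : PGLine F | pgMem P L ∧ nsec S L = 2}
      {L : PGLine F | pgMem P L ∧ nsec S L = k} := by
    rw [Set.disjoint_left]
    rintro A ⟨_, h2⟩ ⟨_, h3⟩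
    omega
  have hunion := Set.ncard_union_eq hdisj (Set.toFinite _) (Set.toFinite _)
  rw [hP.1, hP.2] at hunion
  have heq : {L : PGLine F | pgMem P L ∧ nsec S L = 2} ∪
      {L : PGLine F | pgMem P L ∧ nsec S L = k} = {L : PGLine F | pgMem P L} := by
    refine Set.eq_of_subset_of_ncard_le ?_ ?_ (Set.toFinite _)
    · rintro A (h | h) <;> exact h.1
    · rw [hunion]
      exact ncard_pencil_le P
  have hmem : L ∈ {L : PGLine F | pgMem P L} := hL
  rw [← heq] at hmem
  rcases hmem with h | h
  · exact h.2
  · exact absurd h.2 hLk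

end hasType2qk1

end ProjectivePart

section AffineCoordinates

open Module

variable {F : Type*} [Field F] (B : Basis (Fin 3) F (Fin 3 → F))

/-- The first affine coordinate, with the line `B.coord 2 = 0` at infinity. -/
noncomputable def affineX (P : PGPoint F) : F := B.coord 0 P.rep / B.coord 2 P.rep

/-- The second affine coordinate, with the line `B.coord 2 = 0` at infinity. -/
noncomputable def affineY (P : PGPoint F) : F := B.coord 1 P.rep / B.coord 2 P.rep

theorem dirVec_ne_zero (s : F) : B 1 + s • B 0 ≠ 0 := fun h => by
  simpa using congrArg (B.coord 1) h

/-- The point at infinity of the lines of slope `s`. -/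
noncomputable def dirPoint (s : F) : PGPoint F :=
  Projectivization.mk F (B 1 + s • B 0) (dirVec_ne_zero B s)

theorem slopeForm_ne_zero (s c : F) : B.coord 0 - s • B.coord 1 - c • B.coord 2 ≠ 0 := fun h => by
  simpa using LinearMap.congr_fun h (B 0)

/-- The line with affine equation `affineX - s * affineY = c`. -/
noncomputable def slopeLine (s c : F) : PGLine F := kerLine _ (slopeForm_ne_zero B s c)

variable {B}

theorem dirPoint_pgMem_slopeLine {s t c : F} : pgMem (dirPoint B t) (slopeLine B s c) ↔ t = s := by
  rw [dirPoint, slopeLine, mk_pgMem_kerLine]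
  simp [sub_eq_zero]

theorem dirPoint_pgMem {L : PGLine F} (hL : ∀ v, v ∈ L.val ↔ B.coord 2 v = 0) (t : F) :
    pgMem (dirPoint B t) L := by
  rw [dirPoint, pgMem_mk, hL]
  simp

theorem pgMem_slopeLine_iff {P : PGPoint F} (hP : B.coord 2 P.rep ≠ 0) {s c : F} :
    pgMem P (slopeLine B s c) ↔ affineX B P - s * affineY B P = c := by
  rw [slopeLine, pgMem_kerLine, affineX, affineY]
  simp only [LinearMap.sub_apply, LinearMap.smul_apply, smul_eq_mul]
  rw [sub_eq_zero, ← mul_div_assoc, ← sub_div, div_eq_iff hP]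

theorem eq_of_affine_eq {P Q : PGPoint F} (hP : B.coord 2 P.rep ≠ 0) (hQ : B.coord 2 Q.rep ≠ 0)
    (hX : affineX B P = affineX B Q) (hY : affineY B P = affineY B Q) : P = Q := by
  rw [affineX, affineX, div_eq_div_iff hP hQ] at hX
  rw [affineY, affineY, div_eq_div_iff hP hQ] at hY
  rw [← P.mk_rep, ← Q.mk_rep, Projectivization.mk_eq_mk_iff']
  refine ⟨B.coord 2 P.rep / B.coord 2 Q.rep, B.ext_elem fun i => ?_⟩
  simp only [Basis.coord_apply] at *
  rw [map_smul, Finsupp.smul_apply, smul_eq_mul, div_mul_eq_mul_div, div_eq_iff hQ]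
  fin_cases i
  · exact (mul_comm _ _).trans hX.symm
  · exact (mul_comm _ _).trans hY.symm
  · rfl

theorem eq_dirPoint {P : PGPoint F} {s : F} (h2 : B.coord 2 P.rep = 0)
    (h0 : B.coord 0 P.rep = s * B.coord 1 P.rep) : P = dirPoint B s := by
  rw [← P.mk_rep, dirPoint, Projectivization.mk_eq_mk_iff']
  refine ⟨B.coord 1 P.rep, B.ext_elem fun i => ?_⟩
  simp only [Basis.coord_apply] at *
  fin_cases i <;> simp [h0, h2, mul_comm]

theorem nsec_slopeLine [DecidableEq F] {S : Set (PGPoint F)} {U : Finset (PGPoint F)}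
    (hU : ∀ R, R ∈ U ↔ R ∈ S ∧ B.coord 2 R.rep ≠ 0) {P : PGPoint F} (hP : P ∈ U) {s : F}
    (hs : dirPoint B s ∉ S) :
    nsec S (slopeLine B s (affineX B P - s * affineY B P)) =
      slopeCount U (affineX B) (affineY B) P s + 1 := by
  classical
  have hset : {R ∈ S | pgMem R (slopeLine B s (affineX B P - s * affineY B P))} =
      ↑(insert P (U.filter fun Q => affineY B Q ≠ affineY B P ∧
        affineX B Q - affineX B P = s * (affineY B Q - affineY B P))) := by
    ext R
    simp only [Set.mem_ofPred_eq, Finset.coe_insert, Finset.coe_filter, Set.mem_insert_iff]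
    constructor
    · rintro ⟨hRS, hR⟩
      by_cases h2 : B.coord 2 R.rep = 0
      · refine absurd hRS ?_
        rw [slopeLine, pgMem_kerLine] at hR
        simp only [LinearMap.sub_apply, LinearMap.smul_apply, smul_eq_mul, h2] at hR
        rwa [eq_dirPoint (s := s) h2 (by linear_combination hR)]
      · rw [pgMem_slopeLine_iff h2] at hR
        by_cases hY : affineY B R = affineY B P
        · refine Or.inl (eq_of_affine_eq h2 ((hU P).1 hP).2 ?_ hY)
          linear_combination hR + s * hY
        · exact Or.inr ⟨(hU R).2 ⟨hRS, h2⟩, hY, by linear_combination hR⟩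
    · rintro (rfl | ⟨hRU, _, hR⟩)
      · exact ⟨((hU R).1 hP).1, (pgMem_slopeLine_iff ((hU R).1 hP).2).2 rfl⟩
      · refine ⟨((hU R).1 hRU).1, (pgMem_slopeLine_iff ((hU R).1 hRU).2).2 ?_⟩
        linear_combination hR
  rw [nsec, hset, Set.ncard_coe_finset, Finset.card_insert_of_notMem (by simp), slopeCount]

end AffineCoordinates

/-- If all points of `S` on the `k`-secant `ℓ` have type `(2_q, k_1)`, then the `k`-secants other
than `ℓ` through points of type `(2_q, k_1)` meet `ℓ` in the same point. -/
theorem pgMem_of_pgMem_of_hasType2qk1 {F : Type*} [Field F] [Fintype F] {k : ℕ} (hk : 3 ≤ k)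
    {S : Set (PGPoint F)} (hsize : S.ncard = Fintype.card F + k)
    {ℓ : PGLine F} (hℓ : nsec S ℓ = k)
    (htype : ∀ P ∈ S, pgMem P ℓ → hasType2qk1 (Fintype.card F) k S P)
    {m₁ m₂ : PGLine F} (hm₁ : nsec S m₁ = k) (hm₂ : nsec S m₂ = k) (hne₁ : m₁ ≠ ℓ) (hne₂ : m₂ ≠ ℓ)
    {P₁ P₂ : PGPoint F} (hP₁S : P₁ ∈ S) (hP₂S : P₂ ∈ S) (hP₁m : pgMem P₁ m₁) (hP₂m : pgMem P₂ m₂)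
    (hP₁ : hasType2qk1 (Fintype.card F) k S P₁) (hP₂ : hasType2qk1 (Fintype.card F) k S P₂)
    {M : PGPoint F} (hMℓ : pgMem M ℓ) (hMm : pgMem M m₁) : pgMem M m₂ := by
  classical
  by_contra hMm₂
  obtain ⟨B, hB0, hB⟩ := exists_basis_adapted hMℓ
  have hmemℓ : ∀ R : PGPoint F, pgMem R ℓ ↔ B.coord 2 R.rep = 0 := fun R =>
    (pgMem_iff_rep_mem R ℓ).trans (hB _)
  have hnotMem : ∀ {R : PGPoint F} {m : PGLine F}, nsec S m = k → m ≠ ℓ → pgMem R m →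
      pgMem R ℓ → R ∉ S := fun hm hne hRm hRℓ hRS =>
    hne ((htype _ hRS hRℓ).eq_of_nsec_eq hRm hRℓ hm hℓ)
  have hMS : M ∉ S := hnotMem hm₁ hne₁ hMm hMℓ
  obtain ⟨U, hU⟩ : ∃ U : Finset (PGPoint F), ↑U = S \ {R | pgMem R ℓ} :=
    ⟨(Set.toFinite _).toFinset, Set.Finite.coe_toFinset _⟩
  have hUmem : ∀ R, R ∈ U ↔ R ∈ S ∧ B.coord 2 R.rep ≠ 0 := by
    intro R
    rw [← Finset.mem_coe, hU, Set.mem_sdiff, Set.mem_ofPred_eq, hmemℓ]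
  have hUcard : U.card = Fintype.card F := by
    have h := Set.ncard_inter_add_ncard_sdiff_eq_ncard S {R | pgMem R ℓ} (Set.toFinite _)
    have hinter : (S ∩ {R | pgMem R ℓ}).ncard = k := hℓ
    rw [← hU, Set.ncard_coe_finset, hinter] at h
    omega
  let T : Finset F := Finset.univ.filter fun t => dirPoint B t ∈ S
  have hTmem : ∀ t, t ∈ T ↔ dirPoint B t ∈ S := fun t => by simp [T]
  have hinfinity : ∀ R : PGPoint F, R ≠ M → pgMem R ℓ → ∃ t, R = dirPoint B t := by
    intro R hRM hRℓ
    have h2 := (hmemℓ R).1 hRℓ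
    have h1 := coord_rep_ne_zero_of_ne hRM hB0 h2
    exact ⟨B.coord 0 R.rep / B.coord 1 R.rep, eq_dirPoint h2 (div_mul_cancel₀ _ h1).symm⟩
  have hTcard : k ≤ T.card := by
    have hsub : {R ∈ S | pgMem R ℓ} ⊆ ↑(T.image (dirPoint B)) := by
      rintro R ⟨hRS, hRℓ⟩
      obtain ⟨t, rfl⟩ := hinfinity R (fun h => hMS (h ▸ hRS)) hRℓ
      exact Finset.mem_coe.2 (Finset.mem_image_of_mem _ ((hTmem t).2 hRS))
    have h := Set.ncard_le_ncard hsub (Set.toFinite _)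
    rw [Set.ncard_coe_finset] at h
    rw [← hℓ]
    exact h.trans Finset.card_image_le
  have hinj : ∀ t ∈ T, Set.InjOn (fun Q => affineX B Q - t * affineY B Q) U := by
    intro t ht Q hQ R hR hQR
    by_contra hne
    obtain ⟨hQS, hQ2⟩ := (hUmem Q).1 hQ
    obtain ⟨hRS, hR2⟩ := (hUmem R).1 hR
    have htS := (hTmem t).1 ht
    have htℓ := dirPoint_pgMem hB t
    set L := slopeLine B t (affineX B Q - t * affineY B Q)
    have hQL : pgMem Q L := (pgMem_slopeLine_iff hQ2).2 rfl
    have hRL : pgMem R L := (pgMem_slopeLine_iff hR2).2 hQR.symm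
    have htL : pgMem (dirPoint B t) L := dirPoint_pgMem_slopeLine.2 rfl
    have hLk : nsec S L ≠ k := by
      intro h
      refine hnotMem h (fun hLℓ => hQ2 ?_) htL htℓ htS
      rwa [← hmemℓ, ← hLℓ]
    have htwo := (htype _ htS htℓ).nsec_eq_two hk htL hLk
    have hthree : ({Q, R, dirPoint B t} : Finset (PGPoint F)).card = 3 := by
      refine Finset.card_eq_three.2 ⟨Q, R, _, hne, ?_, ?_, rfl⟩
      · intro h
        exact hQ2 ((hmemℓ Q).1 (h ▸ htℓ))
      · intro h
        exact hR2 ((hmemℓ R).1 (h ▸ htℓ))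
    have hsub : (({Q, R, dirPoint B t} : Finset (PGPoint F)) : Set (PGPoint F)) ⊆
        {A ∈ S | pgMem A L} := by
      intro A hA
      simp only [Finset.coe_insert, Finset.coe_singleton, Set.mem_insert_iff,
        Set.mem_singleton_iff] at hA
      rcases hA with rfl | rfl | rfl
      exacts [⟨hQS, hQL⟩, ⟨hRS, hRL⟩, ⟨htS, htL⟩]
    have hle := Set.ncard_le_ncard hsub (Set.toFinite _)
    rw [Set.ncard_coe_finset, hthree] at hle
    change 3 ≤ nsec S L at hle
    omega
  have hP₁U : P₁ ∈ U := (hUmem P₁).2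
    ⟨hP₁S, fun h => hnotMem hm₁ hne₁ hP₁m ((hmemℓ P₁).2 h) hP₁S⟩
  have hP₂U : P₂ ∈ U := (hUmem P₂).2
    ⟨hP₂S, fun h => hnotMem hm₂ hne₂ hP₂m ((hmemℓ P₂).2 h) hP₂S⟩
  obtain ⟨R, hRm, hRℓ⟩ := exists_pgMem_pgMem m₂ ℓ
  have hRS := hnotMem hm₂ hne₂ hRm hRℓ
  obtain ⟨m, rfl⟩ := hinfinity R (fun h => hMm₂ (h ▸ hRm)) hRℓ
  have hself : ∀ {P : PGPoint F} (s : F), P ∈ U →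
      pgMem P (slopeLine B s (affineX B P - s * affineY B P)) := fun s hP =>
    (pgMem_slopeLine_iff ((hUmem _).1 hP).2).2 rfl
  have hcount : ∀ {P : PGPoint F} {s : F}, P ∈ U → hasType2qk1 (Fintype.card F) k S P → s ∉ T →
      nsec S (slopeLine B s (affineX B P - s * affineY B P)) ≠ k →
      slopeCount U (affineX B) (affineY B) P s = 1 := by
    intro P s hPU hP hs hne
    have h := hP.nsec_eq_two hk (hself s hPU) hne
    rw [nsec_slopeLine hUmem hPU (fun h => hs ((hTmem s).2 h))] at h
    omega
  refine slopeCount_ne hUcard hinj hk hTcard hP₁U hP₂U (m := m)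
    (fun h => hRS ((hTmem m).1 h)) (fun s hs => hcount hP₁U hP₁ hs fun h => ?_)
    (fun s hs hsm => hcount hP₂U hP₂ hs fun h => ?_) ?_
  · have hL := hP₁.eq_of_nsec_eq (hself s hP₁U) hP₁m h hm₁
    rw [← hL, slopeLine, pgMem_kerLine, ← hB0] at hMm
    simp at hMm
  · have hL := hP₂.eq_of_nsec_eq (hself s hP₂U) hP₂m h hm₂
    rw [← hL] at hRm
    exact hsm (dirPoint_pgMem_slopeLine.1 hRm).symm
  · have hL : slopeLine B m (affineX B P₂ - m * affineY B P₂) = m₂ :=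
      pgLine_eq_of_mem (ne_of_mem_of_not_mem hP₂S hRS) (hself m hP₂U)
        (dirPoint_pgMem_slopeLine.2 rfl) hP₂m hRm
    have h := nsec_slopeLine hUmem hP₂U hRS
    rw [hL, hm₂] at h
    omega

/-- Let `S` be a point set of size `q + k` in `PG(2,q)`, `k ≥ 3`.  Suppose `ℓ₁` is a `k`-secant
of `S` all of whose points of `S ∩ ℓ₁` have type `(2_q, k_1)`.  Then all the `k`-secants of
`S` containing at least one point of type `(2_q, k_1)` are concurrent. -/
theorem stmt_13 {F : Type*} [Field F] [Fintype F] (q : ℕ) (hq : Fintype.card F = q)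
    (k : ℕ) (hk : 3 ≤ k)
    (S : Set (PGPoint F)) (hsize : S.ncard = q + k)
    (ℓ₁ : PGLine F) (hℓ₁ : nsec S ℓ₁ = k)
    (htype : ∀ P ∈ S, pgMem P ℓ₁ → hasType2qk1 q k S P) :
    ∃ C : PGPoint F, ∀ m : PGLine F, nsec S m = k →
      (∃ P ∈ S, pgMem P m ∧ hasType2qk1 q k S P) → pgMem C m := by
  subst hq
  by_cases h : ∃ m : PGLine F, m ≠ ℓ₁ ∧ nsec S m = k ∧
      ∃ P ∈ S, pgMem P m ∧ hasType2qk1 (Fintype.card F) k S P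
  · obtain ⟨m₁, hne₁, hm₁, P₁, hP₁S, hP₁m, hP₁⟩ := h
    obtain ⟨M, hMm, hMℓ⟩ := exists_pgMem_pgMem m₁ ℓ₁
    refine ⟨M, fun m hm ⟨P, hPS, hPm, hP⟩ => ?_⟩
    by_cases hne : m = ℓ₁
    · rwa [hne]
    · exact pgMem_of_pgMem_of_hasType2qk1 hk hsize hℓ₁ htype hm₁ hm hne₁ hne hP₁S hPS hP₁m hPm
        hP₁ hP hMℓ hMm
  · obtain ⟨M, hM, -⟩ := exists_pgMem_pgMem ℓ₁ ℓ₁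
    refine ⟨M, fun m hm hP => ?_⟩
    have hmℓ : m = ℓ₁ := by
      by_contra hne
      exact h ⟨m, hne, hm, hP⟩
    rwa [hmℓ]
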